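/- arXiv:2408.06655 — 11 statements merged into one kernel-verified Lean document; each statement's English description precedes it below -/
import Mathlib

section
/- Discrete mass conservation of the 1D HOC-Splitting scheme (Theorem 3.1): Let γ > 0, τ > 0, and let f : ℝ → ℝ be any function. Suppose {u^n}_{n=0}^{Nt} together with intermediate stages {u^{n,1}, u^{n,2}, u^{n,3}} and source grid functions {S^n}_{n=0}^{Nt} are periodic grid functions satisfying, for each 0 ≤ n ≤ Nt−1: (i) A((u^{n,1} − u^n)/(τ/2)) = γ δ²((u^{n,1} + u^n)/2); (ii) B((u^{n,2} − u^{n,1})/τ) + D(f ∘ u^{n,1}) = B S^n; (iii) B((u^{n,3} − u^{n,1})/τ) + (1/2) D(f ∘ u^{n,1} + f ∘ u^{n,2}) = (1/2) B(S^n + S^{n+1}); (iv) A((u^{n+1} − u^{n,3})/(τ/2)) = γ δ²((u^{n+1} + u^{n,3})/2). Then for every 0 ≤ n ≤ Nt−1: (u^{n+1}, 1) = (u^0, 1) + (τ/2) Σ_{k=0}^{n} (S^k + S^{k+1}, 1). -/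
/-- Second-order central difference operator on periodic grid functions. -/
noncomputable def delta2 (N : ℕ) (h : ℝ) (v : ZMod N → ℝ) : ZMod N → ℝ :=
  fun i => (v (i + 1) - 2 * v i + v (i - 1)) / h ^ 2

/-- Central first-difference operator `(D v)ᵢ = (vᵢ₊₁ − vᵢ₋₁)/(2h)`. -/
noncomputable def Dop (N : ℕ) (h : ℝ) (v : ZMod N → ℝ) : ZMod N → ℝ :=
  fun i => (v (i + 1) - v (i - 1)) / (2 * h)

/-- Fourth-order compact operator `A = I + (h²/12) δ²`. -/
noncomputable def Aop (N : ℕ) (h : ℝ) (v : ZMod N → ℝ) : ZMod N → ℝ :=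
  fun i => v i + h ^ 2 / 12 * delta2 N h v i

/-- Fourth-order compact operator `B = I + (h²/6) δ²`. -/
noncomputable def Bop (N : ℕ) (h : ℝ) (v : ZMod N → ℝ) : ZMod N → ℝ :=
  fun i => v i + h ^ 2 / 6 * delta2 N h v i

/-- Discrete L² inner product `(v, w) = h ∑ᵢ vᵢ wᵢ`. -/
noncomputable def ip (N : ℕ) [NeZero N] (h : ℝ) (v w : ZMod N → ℝ) : ℝ :=
  h * ∑ i, v i * w i

theorem sum_shift_add (N : ℕ) [NeZero N] (v : ZMod N → ℝ) :
    ∑ i, v (i + 1) = ∑ i, v i :=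
  Equiv.sum_comp (Equiv.addRight (1 : ZMod N)) v

theorem sum_shift_sub (N : ℕ) [NeZero N] (v : ZMod N → ℝ) :
    ∑ i, v (i - 1) = ∑ i, v i :=
  Equiv.sum_comp (Equiv.subRight (1 : ZMod N)) v

theorem sum_delta2 (N : ℕ) [NeZero N] (h : ℝ) (v : ZMod N → ℝ) :
    ∑ i, delta2 N h v i = 0 := by
  simp only [delta2]
  rw [← Finset.sum_div, Finset.sum_add_distrib, Finset.sum_sub_distrib, ← Finset.mul_sum,
    sum_shift_add, sum_shift_sub]
  ring

theorem sum_Dop (N : ℕ) [NeZero N] (h : ℝ) (v : ZMod N → ℝ) :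
    ∑ i, Dop N h v i = 0 := by
  simp only [Dop]
  rw [← Finset.sum_div, Finset.sum_sub_distrib, sum_shift_add, sum_shift_sub]
  ring

theorem sum_Aop (N : ℕ) [NeZero N] (h : ℝ) (v : ZMod N → ℝ) :
    ∑ i, Aop N h v i = ∑ i, v i := by
  simp only [Aop]
  rw [Finset.sum_add_distrib, ← Finset.mul_sum, sum_delta2]
  ring

theorem sum_Bop (N : ℕ) [NeZero N] (h : ℝ) (v : ZMod N → ℝ) :
    ∑ i, Bop N h v i = ∑ i, v i := by
  simp only [Bop]
  rw [Finset.sum_add_distrib, ← Finset.mul_sum, sum_delta2]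
  ring

/-- Discrete mass conservation of the 1D HOC-Splitting scheme (Theorem 3.1). -/
theorem hoc_splitting_mass_conservation_1d
    (N : ℕ) [NeZero N] (h τ γ : ℝ) (hh : 0 < h) (hτ : 0 < τ) (hγ : 0 < γ)
    (f : ℝ → ℝ) (Nt : ℕ)
    (u u1 u2 u3 S : ℕ → ZMod N → ℝ)
    -- (i) Crank–Nicolson diffusion half step
    (heq1 : ∀ n < Nt, ∀ i : ZMod N,
      Aop N h (fun j => (u1 n j - u n j) / (τ / 2)) i
        = γ * delta2 N h (fun j => (u1 n j + u n j) / 2) i)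
    -- (ii) SSP-RK2 predictor
    (heq2 : ∀ n < Nt, ∀ i : ZMod N,
      Bop N h (fun j => (u2 n j - u1 n j) / τ) i
          + Dop N h (fun j => f (u1 n j)) i
        = Bop N h (S n) i)
    -- (iii) SSP-RK2 corrector
    (heq3 : ∀ n < Nt, ∀ i : ZMod N,
      Bop N h (fun j => (u3 n j - u1 n j) / τ) i
          + 1 / 2 * Dop N h (fun j => f (u1 n j) + f (u2 n j)) i
        = 1 / 2 * Bop N h (fun j => S n j + S (n + 1) j) i)
    -- (iv) Crank–Nicolson diffusion half step
    (heq4 : ∀ n < Nt, ∀ i : ZMod N,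
      Aop N h (fun j => (u (n + 1) j - u3 n j) / (τ / 2)) i
        = γ * delta2 N h (fun j => (u (n + 1) j + u3 n j) / 2) i) :
    ∀ n < Nt,
      ip N h (u (n + 1)) (fun _ => 1)
        = ip N h (u 0) (fun _ => 1)
          + τ / 2 * ∑ k ∈ Finset.range (n + 1),
              ip N h (fun j => S k j + S (k + 1) j) (fun _ => 1) := by
  have step : ∀ n < Nt, ip N h (u (n + 1)) (fun _ => 1) = ip N h (u n) (fun _ => 1)
      + τ / 2 * ip N h (fun j => S n j + S (n + 1) j) (fun _ => 1) := by
    intro n hn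
    have e1 := Finset.sum_congr (rfl : (Finset.univ : Finset (ZMod N)) = Finset.univ)
      (fun i _ => heq1 n hn i)
    have e3 := Finset.sum_congr (rfl : (Finset.univ : Finset (ZMod N)) = Finset.univ)
      (fun i _ => heq3 n hn i)
    have e4 := Finset.sum_congr (rfl : (Finset.univ : Finset (ZMod N)) = Finset.univ)
      (fun i _ => heq4 n hn i)
    rw [sum_Aop, ← Finset.mul_sum, sum_delta2, ← Finset.sum_div, Finset.sum_sub_distrib,
      mul_zero, div_eq_zero_iff] at e1 e4
    rw [Finset.sum_add_distrib, sum_Bop, ← Finset.mul_sum, ← Finset.mul_sum, sum_Dop, sum_Bop,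
      ← Finset.sum_div, Finset.sum_sub_distrib, mul_zero, add_zero, div_eq_iff hτ.ne'] at e3
    have e1' := e1.resolve_right (by positivity)
    have e4' := e4.resolve_right (by positivity)
    simp only [ip, mul_one]
    linear_combination h * e1' + h * e3 + h * e4'
  intro n
  induction n with
  | zero => intro hn; simpa using step 0 hn
  | succ k ih =>
    intro hn
    rw [step (k + 1) hn, ih (by omega), Finset.sum_range_succ _ (k + 1)]
    ring
end

section
/- Discrete mass conservation of the 2D HOC-ADI-Splitting scheme (Theorem 3.2): Let γˣ, γʸ > 0, τ > 0, and f, g : ℝ → ℝ be any functions. Suppose {u^n}_{n=0}^{Nt}, intermediate stages {û^{n,1}, u^{n,1}, û^{n,2}, u^{n,2}, û^{n,3}, u^{n,3}, û^{n,4}}, and source grid functions {S^n} are 2D periodic grid functions satisfying, for each n: (i) (A_x − (γˣτ/4)δx²) û^{n,1} = (A_x + (γˣτ/4)δx²)(A_y + (γʸτ/4)δy²) u^n; (ii) (A_y − (γʸτ/4)δy²) u^{n,1} = û^{n,1}; (iii) B_x û^{n,2} = B u^{n,1} − τ B_y Dx(f ∘ u^{n,1}) − τ B_x Dy(g ∘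 u^{n,1}) + τ B S^n; (iv) B_y u^{n,2} = û^{n,2}; (v) B_x û^{n,3} = B u^{n,1} − (τ/2) B_y Dx(f ∘ u^{n,1} + f ∘ u^{n,2}) − (τ/2) B_x Dy(g ∘ u^{n,1} + g ∘ u^{n,2}) + (τ/2) B(S^n + S^{n+1}); (vi) B_y u^{n,3} = û^{n,3}; (vii) (A_x − (γˣτ/4)δx²) û^{n,4} = (A_x + (γˣτ/4)δx²)(A_y + (γʸτ/4)δy²) u^{n,3}; (viii) (A_y − (γʸτ/4)δy²) u^{n+1} = û^{n,4}. Then for every n: (u^{n+1}, 1) = (u^0, 1) + (τ/2) Σ_{k=0}^{n} (S^k + S^{k+1}, 1). -/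
/-- Second-order central difference in the `x` direction. -/
noncomputable def dx2 (Nx Ny : ℕ) (hx : ℝ) (v : ZMod Nx × ZMod Ny → ℝ) :
    ZMod Nx × ZMod Ny → ℝ :=
  fun p => (v (p.1 + 1, p.2) - 2 * v p + v (p.1 - 1, p.2)) / hx ^ 2

/-- Second-order central difference in the `y` direction. -/
noncomputable def dy2 (Nx Ny : ℕ) (hy : ℝ) (v : ZMod Nx × ZMod Ny → ℝ) :
    ZMod Nx × ZMod Ny → ℝ :=
  fun p => (v (p.1, p.2 + 1) - 2 * v p + v (p.1, p.2 - 1)) / hy ^ 2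

/-- Central first difference in the `x` direction. -/
noncomputable def Dx (Nx Ny : ℕ) (hx : ℝ) (v : ZMod Nx × ZMod Ny → ℝ) :
    ZMod Nx × ZMod Ny → ℝ :=
  fun p => (v (p.1 + 1, p.2) - v (p.1 - 1, p.2)) / (2 * hx)

/-- Central first difference in the `y` direction. -/
noncomputable def Dy (Nx Ny : ℕ) (hy : ℝ) (v : ZMod Nx × ZMod Ny → ℝ) :
    ZMod Nx × ZMod Ny → ℝ :=
  fun p => (v (p.1, p.2 + 1) - v (p.1, p.2 - 1)) / (2 * hy)

/-- Compact operator `A_x = I + (h_x²/12) δx²`. -/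
noncomputable def Ax (Nx Ny : ℕ) (hx : ℝ) (v : ZMod Nx × ZMod Ny → ℝ) :
    ZMod Nx × ZMod Ny → ℝ :=
  fun p => v p + hx ^ 2 / 12 * dx2 Nx Ny hx v p

/-- Compact operator `A_y = I + (h_y²/12) δy²`. -/
noncomputable def Ay (Nx Ny : ℕ) (hy : ℝ) (v : ZMod Nx × ZMod Ny → ℝ) :
    ZMod Nx × ZMod Ny → ℝ :=
  fun p => v p + hy ^ 2 / 12 * dy2 Nx Ny hy v p

/-- Compact operator `B_x = I + (h_x²/6) δx²`. -/
noncomputable def Bx (Nx Ny : ℕ) (hx : ℝ) (v : ZMod Nx × ZMod Ny → ℝ) :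
    ZMod Nx × ZMod Ny → ℝ :=
  fun p => v p + hx ^ 2 / 6 * dx2 Nx Ny hx v p

/-- Compact operator `B_y = I + (h_y²/6) δy²`. -/
noncomputable def By (Nx Ny : ℕ) (hy : ℝ) (v : ZMod Nx × ZMod Ny → ℝ) :
    ZMod Nx × ZMod Ny → ℝ :=
  fun p => v p + hy ^ 2 / 6 * dy2 Nx Ny hy v p

/-- The 2D compact operator `B = B_x B_y`. -/
noncomputable def Bxy (Nx Ny : ℕ) (hx hy : ℝ) (v : ZMod Nx × ZMod Ny → ℝ) :
    ZMod Nx × ZMod Ny → ℝ :=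
  Bx Nx Ny hx (By Nx Ny hy v)

/-- Discrete L² inner product `(v, w) = h_x h_y ∑_{i,j} v_{i,j} w_{i,j}`. -/
noncomputable def ip2 (Nx Ny : ℕ) [NeZero Nx] [NeZero Ny] (hx hy : ℝ)
    (v w : ZMod Nx × ZMod Ny → ℝ) : ℝ :=
  hx * hy * ∑ p, v p * w p

/-- Discrete L² norm `‖v‖ = √(v, v)`. -/
noncomputable def nrm2 (Nx Ny : ℕ) [NeZero Nx] [NeZero Ny] (hx hy : ℝ)
    (v : ZMod Nx × ZMod Ny → ℝ) : ℝ :=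
  Real.sqrt (ip2 Nx Ny hx hy v v)

theorem sum_shift_aux (Nx Ny : ℕ) [NeZero Nx] [NeZero Ny] (v : ZMod Nx × ZMod Ny → ℝ)
    (a : ZMod Nx) (b : ZMod Ny) : ∑ p : ZMod Nx × ZMod Ny, v (p.1 + a, p.2 + b) = ∑ p, v p :=
  Equiv.sum_comp (Equiv.addRight ((a, b) : ZMod Nx × ZMod Ny)) v

theorem sum_dx2_aux (Nx Ny : ℕ) [NeZero Nx] [NeZero Ny] (h : ℝ) (v : ZMod Nx × ZMod Ny → ℝ) :
    ∑ p, dx2 Nx Ny h v p = 0 := by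
  have h1 := sum_shift_aux Nx Ny v 1 0
  have h2 := sum_shift_aux Nx Ny v (-1) 0
  simp only [add_zero, ← sub_eq_add_neg] at h1 h2
  simp only [dx2, ← Finset.sum_div, Finset.sum_add_distrib, Finset.sum_sub_distrib,
    ← Finset.mul_sum, h1, h2]
  ring

theorem sum_dy2_aux (Nx Ny : ℕ) [NeZero Nx] [NeZero Ny] (h : ℝ) (v : ZMod Nx × ZMod Ny → ℝ) :
    ∑ p, dy2 Nx Ny h v p = 0 := by
  have h1 := sum_shift_aux Nx Ny v 0 1
  have h2 := sum_shift_aux Nx Ny v 0 (-1)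
  simp only [add_zero, ← sub_eq_add_neg] at h1 h2
  simp only [dy2, ← Finset.sum_div, Finset.sum_add_distrib, Finset.sum_sub_distrib,
    ← Finset.mul_sum, h1, h2]
  ring

theorem sum_Dx_aux (Nx Ny : ℕ) [NeZero Nx] [NeZero Ny] (h : ℝ) (v : ZMod Nx × ZMod Ny → ℝ) :
    ∑ p, Dx Nx Ny h v p = 0 := by
  have h1 := sum_shift_aux Nx Ny v 1 0
  have h2 := sum_shift_aux Nx Ny v (-1) 0
  simp only [add_zero, ← sub_eq_add_neg] at h1 h2
  simp only [Dx, ← Finset.sum_div, Finset.sum_sub_distrib, h1, h2]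
  ring

theorem sum_Dy_aux (Nx Ny : ℕ) [NeZero Nx] [NeZero Ny] (h : ℝ) (v : ZMod Nx × ZMod Ny → ℝ) :
    ∑ p, Dy Nx Ny h v p = 0 := by
  have h1 := sum_shift_aux Nx Ny v 0 1
  have h2 := sum_shift_aux Nx Ny v 0 (-1)
  simp only [add_zero, ← sub_eq_add_neg] at h1 h2
  simp only [Dy, ← Finset.sum_div, Finset.sum_sub_distrib, h1, h2]
  ring

theorem sum_Bx_aux (Nx Ny : ℕ) [NeZero Nx] [NeZero Ny] (h : ℝ) (v : ZMod Nx × ZMod Ny → ℝ) :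
    ∑ p, Bx Nx Ny h v p = ∑ p, v p := by
  simp only [Bx, Finset.sum_add_distrib, ← Finset.mul_sum, sum_dx2_aux, mul_zero, add_zero]

theorem sum_By_aux (Nx Ny : ℕ) [NeZero Nx] [NeZero Ny] (h : ℝ) (v : ZMod Nx × ZMod Ny → ℝ) :
    ∑ p, By Nx Ny h v p = ∑ p, v p := by
  simp only [By, Finset.sum_add_distrib, ← Finset.mul_sum, sum_dy2_aux, mul_zero, add_zero]

/-- Discrete mass conservation of the 2D HOC-ADI-Splitting scheme (Theorem 3.2). -/
theorem hoc_adi_splitting_mass_conservation_2d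
    (Nx Ny : ℕ) [NeZero Nx] [NeZero Ny] (hx hy τ γx γy : ℝ)
    (hhx : 0 < hx) (hhy : 0 < hy) (hτ : 0 < τ) (hγx : 0 < γx) (hγy : 0 < γy)
    (f g : ℝ → ℝ) (Nt : ℕ)
    (u hu1 u1 hu2 u2 hu3 u3 hu4 S : ℕ → ZMod Nx × ZMod Ny → ℝ)
    -- (i) x-sweep of the first diffusion half step
    (heq1 : ∀ n < Nt, ∀ p : ZMod Nx × ZMod Ny,
      Ax Nx Ny hx (hu1 n) p - γx * τ / 4 * dx2 Nx Ny hx (hu1 n) p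
        = Ax Nx Ny hx
            (fun q => Ay Nx Ny hy (u n) q + γy * τ / 4 * dy2 Nx Ny hy (u n) q) p
          + γx * τ / 4 * dx2 Nx Ny hx
            (fun q => Ay Nx Ny hy (u n) q + γy * τ / 4 * dy2 Nx Ny hy (u n) q) p)
    -- (ii) y-sweep of the first diffusion half step
    (heq2 : ∀ n < Nt, ∀ p : ZMod Nx × ZMod Ny,
      Ay Nx Ny hy (u1 n) p - γy * τ / 4 * dy2 Nx Ny hy (u1 n) p = hu1 n p)
    -- (iii) x-sweep of the SSP-RK2 predictor
    (heq3 : ∀ n < Nt, ∀ p : ZMod Nx × ZMod Ny,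
      Bx Nx Ny hx (hu2 n) p
        = Bxy Nx Ny hx hy (u1 n) p
          - τ * By Nx Ny hy (Dx Nx Ny hx (fun q => f (u1 n q))) p
          - τ * Bx Nx Ny hx (Dy Nx Ny hy (fun q => g (u1 n q))) p
          + τ * Bxy Nx Ny hx hy (S n) p)
    -- (iv) y-sweep of the SSP-RK2 predictor
    (heq4 : ∀ n < Nt, ∀ p : ZMod Nx × ZMod Ny,
      By Nx Ny hy (u2 n) p = hu2 n p)
    -- (v) x-sweep of the SSP-RK2 corrector
    (heq5 : ∀ n < Nt, ∀ p : ZMod Nx × ZMod Ny,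
      Bx Nx Ny hx (hu3 n) p
        = Bxy Nx Ny hx hy (u1 n) p
          - τ / 2 * By Nx Ny hy (Dx Nx Ny hx (fun q => f (u1 n q) + f (u2 n q))) p
          - τ / 2 * Bx Nx Ny hx (Dy Nx Ny hy (fun q => g (u1 n q) + g (u2 n q))) p
          + τ / 2 * Bxy Nx Ny hx hy (fun q => S n q + S (n + 1) q) p)
    -- (vi) y-sweep of the SSP-RK2 corrector
    (heq6 : ∀ n < Nt, ∀ p : ZMod Nx × ZMod Ny,
      By Nx Ny hy (u3 n) p = hu3 n p)
    -- (vii) x-sweep of the second diffusion half step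
    (heq7 : ∀ n < Nt, ∀ p : ZMod Nx × ZMod Ny,
      Ax Nx Ny hx (hu4 n) p - γx * τ / 4 * dx2 Nx Ny hx (hu4 n) p
        = Ax Nx Ny hx
            (fun q => Ay Nx Ny hy (u3 n) q + γy * τ / 4 * dy2 Nx Ny hy (u3 n) q) p
          + γx * τ / 4 * dx2 Nx Ny hx
            (fun q => Ay Nx Ny hy (u3 n) q + γy * τ / 4 * dy2 Nx Ny hy (u3 n) q) p)
    -- (viii) y-sweep of the second diffusion half step
    (heq8 : ∀ n < Nt, ∀ p : ZMod Nx × ZMod Ny,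
      Ay Nx Ny hy (u (n + 1)) p - γy * τ / 4 * dy2 Nx Ny hy (u (n + 1)) p = hu4 n p) :
    ∀ n < Nt,
      ip2 Nx Ny hx hy (u (n + 1)) (fun _ => 1)
        = ip2 Nx Ny hx hy (u 0) (fun _ => 1)
          + τ / 2 * ∑ k ∈ Finset.range (n + 1),
              ip2 Nx Ny hx hy (fun q => S k q + S (k + 1) q) (fun _ => 1) := by
  have step : ∀ n < Nt, ∑ p, u (n + 1) p
      = ∑ p, u n p + τ / 2 * ∑ p, (S n p + S (n + 1) p) := by
    intro n hn
    have e1 := Finset.sum_congr (rfl : (Finset.univ : Finset (ZMod Nx × ZMod Ny)) = _)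
      (fun p _ => heq1 n hn p)
    have e2 := Finset.sum_congr (rfl : (Finset.univ : Finset (ZMod Nx × ZMod Ny)) = _)
      (fun p _ => heq2 n hn p)
    have e5 := Finset.sum_congr (rfl : (Finset.univ : Finset (ZMod Nx × ZMod Ny)) = _)
      (fun p _ => heq5 n hn p)
    have e6 := Finset.sum_congr (rfl : (Finset.univ : Finset (ZMod Nx × ZMod Ny)) = _)
      (fun p _ => heq6 n hn p)
    have e7 := Finset.sum_congr (rfl : (Finset.univ : Finset (ZMod Nx × ZMod Ny)) = _)
      (fun p _ => heq7 n hn p)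
    have e8 := Finset.sum_congr (rfl : (Finset.univ : Finset (ZMod Nx × ZMod Ny)) = _)
      (fun p _ => heq8 n hn p)
    simp only [Bxy, Ax, Ay, sum_Bx_aux, sum_By_aux, Finset.sum_add_distrib, Finset.sum_sub_distrib,
      ← Finset.mul_sum, sum_dx2_aux, sum_dy2_aux, sum_Dx_aux, sum_Dy_aux, mul_zero, add_zero,
      sub_zero] at e1 e2 e5 e6 e7 e8 ⊢
    linarith
  intro n
  induction n with
  | zero =>
    intro hn
    have := step 0 hn
    simp only [ip2, mul_one, Finset.sum_range_succ, Finset.sum_range_zero] at this ⊢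
    rw [this]
    ring
  | succ k ih =>
    intro hn
    have h1 := ih (by omega)
    have h2 := step (k + 1) hn
    rw [Finset.sum_range_succ, mul_add, ← add_assoc, ← h1]
    simp only [ip2, mul_one] at h2 ⊢
    rw [h2]
    ring
end

section
/- Fourth-order compact identity with integral remainder (Lemma 5.1): Let h > 0, x ∈ ℝ, and let v : ℝ → ℝ be six times continuously differentiable on the interval [x − h, x + h]. Define ζ(λ) = 5(1 − λ)³ − 3(1 − λ)⁵. Then (v''(x + h) + 10 v''(x) + v''(x − h))/12 = (v(x + h) − 2 v(x) + v(x − h))/h² + (h⁴/360) ∫₀¹ [v⁽⁶⁾(x − λh) + v⁽⁶⁾(x + λh)] ζ(λ) dλ. -/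
theorem compact_aux (h x c : ℝ) (hh : 0 < h) (hc : c ≠ 0) (hch : |c| = h) (v : ℝ → ℝ)
    (S : Set ℝ) (hS : S = Set.Icc (x - h) (x + h))
    (hv : ContDiffOn ℝ 6 v S) :
    IntervalIntegrable (fun l : ℝ => iteratedDerivWithin 6 v S (x + l * c)
            * (5 * (1 - l) ^ 3 - 3 * (1 - l) ^ 5)) MeasureTheory.volume 0 1 ∧
    ∫ l in (0 : ℝ)..1, iteratedDerivWithin 6 v S (x + l * c)
            * (5 * (1 - l) ^ 3 - 3 * (1 - l) ^ 5)
      = 30 * iteratedDerivWithin 2 v S (x + c) / c ^ 4 - 360 * v (x + c) / c ^ 6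
        - (2 * iteratedDerivWithin 5 v S x / c - 30 * iteratedDerivWithin 3 v S x / c ^ 3
          - 150 * iteratedDerivWithin 2 v S x / c ^ 4 - 360 * iteratedDerivWithin 1 v S x / c ^ 5
          - 360 * v x / c ^ 6) := by
  have hU : UniqueDiffOn ℝ S := by
    rw [hS]; exact uniqueDiffOn_Icc (by linarith)
  have hcb : -h ≤ c ∧ c ≤ h := abs_le.mp hch.le
  have hmaps : Set.MapsTo (fun l : ℝ => x + l * c) (Set.Icc 0 1) S := by
    intro l hl
    rw [hS]
    obtain ⟨h0, h1⟩ := hl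
    constructor <;> nlinarith
  have hint : ∀ l ∈ Set.Ioo (0 : ℝ) 1, S ∈ nhds (x + l * c) := by
    intro l hl
    rw [hS]
    obtain ⟨h0, h1⟩ := hl
    apply Icc_mem_nhds <;> nlinarith
  have hcont : ∀ k : ℕ, k ≤ 6 →
      ContinuousOn (fun l : ℝ => iteratedDerivWithin k v S (x + l * c)) (Set.Icc 0 1) := by
    intro k hk
    have h1 : ContinuousOn (iteratedDerivWithin k v S) S :=
      hv.continuousOn_iteratedDerivWithin (by exact_mod_cast hk) hU
    exact h1.comp (by fun_prop) hmaps
  have hder : ∀ k : ℕ, k < 6 → ∀ l ∈ Set.Ioo (0 : ℝ) 1,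
      HasDerivAt (fun l : ℝ => iteratedDerivWithin k v S (x + l * c))
        (iteratedDerivWithin (k + 1) v S (x + l * c) * c) l := by
    intro k hk l hl
    have hmem : x + l * c ∈ S := mem_of_mem_nhds (hint l hl)
    have h1 : DifferentiableOn ℝ (iteratedDerivWithin k v S) S :=
      hv.differentiableOn_iteratedDerivWithin (by exact_mod_cast hk) hU
    have h2 := (h1 _ hmem).hasDerivWithinAt
    rw [← iteratedDerivWithin_succ] at h2
    have h3 := h2.hasDerivAt (hint l hl)
    have h4 : HasDerivAt (fun l : ℝ => x + l * c) c l := by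
      simpa using ((hasDerivAt_id l).mul_const c).const_add x
    exact h3.comp l h4
  have hI : IntervalIntegrable (fun l : ℝ => iteratedDerivWithin 6 v S (x + l * c)
            * (5 * (1 - l) ^ 3 - 3 * (1 - l) ^ 5)) MeasureTheory.volume 0 1 := by
    apply ContinuousOn.intervalIntegrable
    rw [Set.uIcc_of_le zero_le_one]
    exact (hcont 6 le_rfl).mul (by fun_prop)
  refine ⟨hI, ?_⟩
  have c0 := hcont 0 (by norm_num)
  have c1 := hcont 1 (by norm_num)
  have c2 := hcont 2 (by norm_num)
  have c3 := hcont 3 (by norm_num)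
  have c4 := hcont 4 (by norm_num)
  have c5 := hcont 5 (by norm_num)
  have key := intervalIntegral.integral_eq_sub_of_hasDerivAt_of_le (zero_le_one (α := ℝ))
    (f := fun l : ℝ =>
      (5 * (1 - l) ^ 3 - 3 * (1 - l) ^ 5) / c * iteratedDerivWithin 5 v S (x + l * c)
      - (15 * (1 - l) ^ 4 - 15 * (1 - l) ^ 2) / c ^ 2 * iteratedDerivWithin 4 v S (x + l * c)
      + (30 * (1 - l) - 60 * (1 - l) ^ 3) / c ^ 3 * iteratedDerivWithin 3 v S (x + l * c)
      - (180 * (1 - l) ^ 2 - 30) / c ^ 4 * iteratedDerivWithin 2 v S (x + l * c)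
      + (-360 * (1 - l)) / c ^ 5 * iteratedDerivWithin 1 v S (x + l * c)
      - 360 / c ^ 6 * iteratedDerivWithin 0 v S (x + l * c))
    (f' := fun l : ℝ => iteratedDerivWithin 6 v S (x + l * c)
            * (5 * (1 - l) ^ 3 - 3 * (1 - l) ^ 5)) (by fun_prop) ?_ hI
  · rw [key]
    simp only [iteratedDerivWithin_zero, one_mul, zero_mul, add_zero]
    ring
  · intro l hl
    have hu : HasDerivAt (fun l : ℝ => 1 - l) (-1) l := by
      simpa using (hasDerivAt_id l).const_sub 1
    have p5 := ((((hu.pow 3).const_mul 5).sub ((hu.pow 5).const_mul 3)).div_const c).mul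
      (hder 5 (by norm_num) l hl)
    have p4 := ((((hu.pow 4).const_mul 15).sub ((hu.pow 2).const_mul 15)).div_const (c ^ 2)).mul
      (hder 4 (by norm_num) l hl)
    have p3 := (((hu.const_mul 30).sub ((hu.pow 3).const_mul 60)).div_const (c ^ 3)).mul
      (hder 3 (by norm_num) l hl)
    have p2 := ((((hu.pow 2).const_mul 180).sub_const 30).div_const (c ^ 4)).mul
      (hder 2 (by norm_num) l hl)
    have p1 := ((hu.const_mul (-360)).div_const (c ^ 5)).mul
      (hder 1 (by norm_num) l hl)
    have p0 := (hder 0 (by norm_num) l hl).const_mul (360 / c ^ 6)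
    refine (((((p5.sub p4).add p3).sub p2).add p1).sub p0).congr_deriv ?_
    norm_num
    field_simp
    ring

/-- Fourth-order compact identity with integral remainder (Lemma 5.1):
for `v ∈ C⁶[x−h, x+h]` and `ζ(λ) = 5(1−λ)³ − 3(1−λ)⁵`,
`(v''(x+h) + 10 v''(x) + v''(x−h))/12 = (v(x+h) − 2v(x) + v(x−h))/h²
  + (h⁴/360) ∫₀¹ [v⁽⁶⁾(x−λh) + v⁽⁶⁾(x+λh)] ζ(λ) dλ`. -/
theorem compact_identity_integral_remainder
    (h x : ℝ) (hh : 0 < h) (v : ℝ → ℝ)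
    (hv : ContDiffOn ℝ 6 v (Set.Icc (x - h) (x + h))) :
    (iteratedDerivWithin 2 v (Set.Icc (x - h) (x + h)) (x + h)
        + 10 * iteratedDerivWithin 2 v (Set.Icc (x - h) (x + h)) x
        + iteratedDerivWithin 2 v (Set.Icc (x - h) (x + h)) (x - h)) / 12
      = (v (x + h) - 2 * v x + v (x - h)) / h ^ 2
        + h ^ 4 / 360 *
          ∫ l in (0 : ℝ)..1,
            (iteratedDerivWithin 6 v (Set.Icc (x - h) (x + h)) (x - l * h)
              + iteratedDerivWithin 6 v (Set.Icc (x - h) (x + h)) (x + l * h))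
            * (5 * (1 - l) ^ 3 - 3 * (1 - l) ^ 5) := by
  obtain ⟨i1, e1⟩ := compact_aux h x h hh hh.ne' (abs_of_pos hh) v _ rfl hv
  obtain ⟨i2, e2⟩ := compact_aux h x (-h) hh (neg_ne_zero.mpr hh.ne')
    (by rw [abs_neg, abs_of_pos hh]) v _ rfl hv
  simp only [mul_neg, ← sub_eq_add_neg] at i2 e2
  simp only [add_mul]
  rw [intervalIntegral.integral_add i2 i1, e1, e2]
  field_simp
  ring
end

section
/- Norm bounds for the compact operator A (part of Lemma 5.2): For every periodic grid function v on ZMod N with mesh size h > 0, one has (2/3)‖v‖ ≤ ‖A v‖ ≤ ‖v‖, where A v = v + (h²/12) δ² v. -/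
/-- Discrete L² norm `‖v‖ = √(v, v)`. -/
noncomputable def nrm (N : ℕ) [NeZero N] (h : ℝ) (v : ZMod N → ℝ) : ℝ :=
  Real.sqrt (ip N h v v)

/-- Norm bounds for the compact operator `A` (part of Lemma 5.2):
`(2/3)‖v‖ ≤ ‖A v‖ ≤ ‖v‖`. -/
theorem Aop_norm_bounds
    (N : ℕ) [NeZero N] (h : ℝ) (hh : 0 < h) (v : ZMod N → ℝ) :
    2 / 3 * nrm N h v ≤ nrm N h (Aop N h v) ∧ nrm N h (Aop N h v) ≤ nrm N h v := by
  have hA : ∀ i, Aop N h v i = (v (i + 1) + 10 * v i + v (i - 1)) / 12 := by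
    intro i
    have : h ≠ 0 := hh.ne'
    simp only [Aop, delta2]
    field_simp
    ring
  have s1 : ∑ i, v (i + 1) * v (i + 1) = ∑ i, v i * v i :=
    Equiv.sum_comp (Equiv.addRight (1 : ZMod N)) (fun i => v i * v i)
  have s2 : ∑ i, v (i - 1) * v (i - 1) = ∑ i, v i * v i :=
    Equiv.sum_comp (Equiv.subRight (1 : ZMod N)) (fun i => v i * v i)
  have up : ∑ i, Aop N h v i * Aop N h v i ≤ ∑ i, v i * v i := by
    have key : ∑ i, Aop N h v i * Aop N h v i ≤
        ∑ i, (1 / 12 * (v (i + 1) * v (i + 1)) + 10 / 12 * (v i * v i)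
          + 1 / 12 * (v (i - 1) * v (i - 1))) := by
      apply Finset.sum_le_sum
      intro i _
      rw [hA]
      nlinarith [sq_nonneg (v (i + 1) - v i), sq_nonneg (v (i - 1) - v i),
        sq_nonneg (v (i + 1) - v (i - 1))]
    rw [Finset.sum_add_distrib, Finset.sum_add_distrib, ← Finset.mul_sum, ← Finset.mul_sum,
      ← Finset.mul_sum, s1, s2] at key
    linarith
  have lo : 4 / 9 * ∑ i, v i * v i ≤ ∑ i, Aop N h v i * Aop N h v i := by
    have key : ∑ i, (-(1 / 18) * (v (i + 1) * v (i + 1)) + 5 / 9 * (v i * v i)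
          + -(1 / 18) * (v (i - 1) * v (i - 1))) ≤ ∑ i, Aop N h v i * Aop N h v i := by
      apply Finset.sum_le_sum
      intro i _
      rw [hA]
      nlinarith [sq_nonneg (v (i + 1) + v i), sq_nonneg (v (i - 1) + v i),
        sq_nonneg (v (i + 1) + v (i - 1) + 2 * v i)]
    rw [Finset.sum_add_distrib, Finset.sum_add_distrib, ← Finset.mul_sum, ← Finset.mul_sum,
      ← Finset.mul_sum, s1, s2] at key
    linarith
  constructor
  · have e : (2 / 3 : ℝ) = Real.sqrt (4 / 9) := by
      rw [show (4 / 9 : ℝ) = (2 / 3) ^ 2 by norm_num, Real.sqrt_sq (by norm_num)]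
    unfold nrm ip
    rw [e, ← Real.sqrt_mul (by norm_num)]
    apply Real.sqrt_le_sqrt
    have := mul_le_mul_of_nonneg_left lo hh.le
    linarith
  · unfold nrm ip
    exact Real.sqrt_le_sqrt (mul_le_mul_of_nonneg_left up hh.le)
end

section
/- Quadratic-form bounds for the compact operator A (part of Lemma 5.2): For every periodic grid function v on ZMod N with mesh size h > 0, one has (2/3)‖v‖² ≤ (A v, v) ≤ ‖v‖², where A v = v + (h²/12) δ² v. In particular (A v, v) ≥ 0, A is symmetric with respect to the discrete inner product, and (v, w) ↦ (A v, w) defines an inner product on periodic grid functions. -/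
lemma ip_Aop_eq (N : ℕ) [NeZero N] (h : ℝ) (hh : 0 < h) (v w : ZMod N → ℝ) :
    ip N h (Aop N h v) w = h * (5 / 6 * ∑ i, v i * w i
      + 1 / 12 * (∑ i, v (i + 1) * w i + ∑ i, v i * w (i + 1))) := by
  have e : ∑ i, v i * w (i + 1) = ∑ i, v (i - 1) * w i := by
    rw [← Equiv.sum_comp (Equiv.addRight (1 : ZMod N)) (fun i => v (i - 1) * w i)]
    simp
  rw [e, ip]
  congr 1
  rw [← Finset.sum_add_distrib, Finset.mul_sum, Finset.mul_sum,
    ← Finset.sum_add_distrib]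
  refine Finset.sum_congr rfl fun i _ => ?_
  simp only [Aop, delta2]
  field_simp
  ring

lemma ip_Aop_bounds (N : ℕ) [NeZero N] (h : ℝ) (hh : 0 < h) (v : ZMod N → ℝ) :
    2 / 3 * ip N h v v ≤ ip N h (Aop N h v) v ∧ ip N h (Aop N h v) v ≤ ip N h v v := by
  have e : ∑ i, v (i + 1) * v (i + 1) = ∑ i, v i * v i :=
    Equiv.sum_comp (Equiv.addRight (1 : ZMod N)) (fun i => v i * v i)
  have c : ∑ i, v i * v (i + 1) = ∑ i, v (i + 1) * v i :=
    Finset.sum_congr rfl fun i _ => mul_comm _ _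
  have p : 0 ≤ ∑ i, (v (i + 1) * v (i + 1) + v i * v i + 2 * (v (i + 1) * v i)) :=
    Finset.sum_nonneg fun i _ => by nlinarith [sq_nonneg (v (i + 1) + v i)]
  have m : 0 ≤ ∑ i, (v (i + 1) * v (i + 1) + v i * v i - 2 * (v (i + 1) * v i)) :=
    Finset.sum_nonneg fun i _ => by nlinarith [sq_nonneg (v (i + 1) - v i)]
  rw [Finset.sum_add_distrib, Finset.sum_add_distrib, ← Finset.mul_sum, e] at p
  rw [Finset.sum_sub_distrib, Finset.sum_add_distrib, ← Finset.mul_sum, e] at m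
  rw [ip_Aop_eq N h hh, c, ip]
  constructor
  · rw [mul_left_comm]
    exact mul_le_mul_of_nonneg_left (by linarith) hh.le
  · exact mul_le_mul_of_nonneg_left (by linarith) hh.le

/-- Quadratic-form bounds for the compact operator `A` (part of Lemma 5.2):
`(2/3)‖v‖² ≤ (A v, v) ≤ ‖v‖²`; in particular `(A v, v) ≥ 0`, `A` is symmetric
for the discrete inner product, and `(v, w) ↦ (A v, w)` is an inner product
(symmetric, nonnegative, and definite). -/
theorem Aop_quadratic_form_bounds
    (N : ℕ) [NeZero N] (h : ℝ) (hh : 0 < h) :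
    (∀ v : ZMod N → ℝ,
        2 / 3 * nrm N h v ^ 2 ≤ ip N h (Aop N h v) v
          ∧ ip N h (Aop N h v) v ≤ nrm N h v ^ 2) ∧
    (∀ v : ZMod N → ℝ, 0 ≤ ip N h (Aop N h v) v) ∧
    (∀ v w : ZMod N → ℝ, ip N h (Aop N h v) w = ip N h v (Aop N h w)) ∧
    (∀ v : ZMod N → ℝ, ip N h (Aop N h v) v = 0 → v = 0) := by
  have nn : ∀ v : ZMod N → ℝ, 0 ≤ ip N h v v := fun v =>
    mul_nonneg hh.le (Finset.sum_nonneg fun i _ => mul_self_nonneg _)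
  refine ⟨fun v => ?_, fun v => ?_, fun v w => ?_, fun v hv => ?_⟩
  · rw [nrm, Real.sq_sqrt (nn v)]
    exact ip_Aop_bounds N h hh v
  · linarith [(ip_Aop_bounds N h hh v).1, nn v]
  · have s : ip N h v (Aop N h w) = ip N h (Aop N h w) v := by
      simp only [ip, mul_comm]
    rw [s, ip_Aop_eq N h hh, ip_Aop_eq N h hh]
    simp only [mul_comm (w _) (v _)]
    ring
  · have z : ip N h v v = 0 := by linarith [(ip_Aop_bounds N h hh v).1, nn v]
    have z2 : ∑ i, v i * v i = 0 := (mul_eq_zero.mp z).resolve_left hh.ne'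
    rw [Finset.sum_eq_zero_iff_of_nonneg fun i _ => mul_self_nonneg _] at z2
    funext i
    exact mul_self_eq_zero.mp (z2 i (Finset.mem_univ i))
end

section
/- Norm and quadratic-form bounds for the compact operator B (part of Lemma 5.2): For every periodic grid function v on ZMod N with mesh size h > 0, one has (1/3)‖v‖ ≤ ‖B v‖ ≤ ‖v‖ and (1/3)‖v‖² ≤ (B v, v) ≤ ‖v‖², where B v = v + (h²/6) δ² v. -/
/-- Norm and quadratic-form bounds for the compact operator `B`
(part of Lemma 5.2): `(1/3)‖v‖ ≤ ‖B v‖ ≤ ‖v‖` and `(1/3)‖v‖² ≤ (B v, v) ≤ ‖v‖²`. -/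
theorem Bop_norm_and_quadratic_form_bounds
    (N : ℕ) [NeZero N] (h : ℝ) (hh : 0 < h) (v : ZMod N → ℝ) :
    1 / 3 * nrm N h v ≤ nrm N h (Bop N h v)
      ∧ nrm N h (Bop N h v) ≤ nrm N h v
      ∧ 1 / 3 * nrm N h v ^ 2 ≤ ip N h (Bop N h v) v
      ∧ ip N h (Bop N h v) v ≤ nrm N h v ^ 2 := by
  have hne : h ≠ 0 := hh.ne'
  have hB : ∀ i, Bop N h v i = (v (i + 1) + 4 * v i + v (i - 1)) / 6 := by
    intro i
    simp only [Bop, delta2]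
    field_simp
    ring
  have e1 : ∑ i, v (i + 1) * v (i + 1) = ∑ i, v i * v i :=
    Equiv.sum_comp (Equiv.addRight (1 : ZMod N)) (fun i => v i * v i)
  have e2 : ∑ i, v (i - 1) * v (i - 1) = ∑ i, v i * v i :=
    Equiv.sum_comp (Equiv.subRight (1 : ZMod N)) (fun i => v i * v i)
  have e3 : ∑ i, v (i + 1) * v i = ∑ i, v i * v (i - 1) := by
    have := Equiv.sum_comp (Equiv.addRight (1 : ZMod N)) (fun i => v i * v (i - 1))
    simpa using this
  have key : ∀ a b c d e f : ℝ,
      ∑ i, (a * (v i * v i) + b * (v (i + 1) * v (i + 1)) + c * (v (i - 1) * v (i - 1))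
        + d * (v (i + 1) * v i) + e * (v i * v (i - 1)) + f * (v (i + 1) * v (i - 1)))
      = (a + b + c) * ∑ i, v i * v i + (d + e) * ∑ i, v i * v (i - 1)
        + f * ∑ i, v (i + 1) * v (i - 1) := by
    intro a b c d e f
    simp only [Finset.sum_add_distrib, ← Finset.mul_sum, e1, e2, e3]
    ring
  have q1 : ∑ i, Bop N h v i * v i = (4 * ∑ i, v i * v i + 2 * ∑ i, v i * v (i - 1)) / 6 := by
    trans (4 / 6 + 0 + 0) * ∑ i, v i * v i + (1 / 6 + 1 / 6) * ∑ i, v i * v (i - 1)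
        + 0 * ∑ i, v (i + 1) * v (i - 1)
    · rw [← key]
      refine Finset.sum_congr rfl fun i _ => ?_
      rw [hB]; ring
    · ring
  have q2 : ∑ i, Bop N h v i * Bop N h v i = (18 * ∑ i, v i * v i + 16 * ∑ i, v i * v (i - 1)
        + 2 * ∑ i, v (i + 1) * v (i - 1)) / 36 := by
    trans (16 / 36 + 1 / 36 + 1 / 36) * ∑ i, v i * v i
        + (8 / 36 + 8 / 36) * ∑ i, v i * v (i - 1)
        + (2 / 36) * ∑ i, v (i + 1) * v (i - 1)
    · rw [← key]
      refine Finset.sum_congr rfl fun i _ => ?_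
      rw [hB]; ring
    · ring
  have i1 : 0 ≤ (1 + 0 + 1) * ∑ i, v i * v i + (0 + 2) * ∑ i, v i * v (i - 1)
      + 0 * ∑ i, v (i + 1) * v (i - 1) := by
    rw [← key]
    refine Finset.sum_nonneg fun i _ => ?_
    nlinarith [sq_nonneg (v i + v (i - 1))]
  have i2 : 0 ≤ (1 + 0 + 1) * ∑ i, v i * v i + (0 + -2) * ∑ i, v i * v (i - 1)
      + 0 * ∑ i, v (i + 1) * v (i - 1) := by
    rw [← key]
    refine Finset.sum_nonneg fun i _ => ?_
    nlinarith [sq_nonneg (v i - v (i - 1))]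
  have i3 : 0 ≤ (0 + 1 + 1) * ∑ i, v i * v i + (0 + 0) * ∑ i, v i * v (i - 1)
      + -2 * ∑ i, v (i + 1) * v (i - 1) := by
    rw [← key]
    refine Finset.sum_nonneg fun i _ => ?_
    nlinarith [sq_nonneg (v (i + 1) - v (i - 1))]
  have i4 : 0 ≤ (4 + 1 + 1) * ∑ i, v i * v i + (4 + 4) * ∑ i, v i * v (i - 1)
      + 2 * ∑ i, v (i + 1) * v (i - 1) := by
    rw [← key]
    refine Finset.sum_nonneg fun i _ => ?_
    nlinarith [sq_nonneg (v (i + 1) + 2 * v i + v (i - 1))]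
  have hS : 0 ≤ ∑ i, v i * v i := Finset.sum_nonneg fun i _ => mul_self_nonneg _
  have hn : nrm N h v ^ 2 = h * ∑ i, v i * v i := Real.sq_sqrt (mul_nonneg hh.le hS)
  refine ⟨?_, ?_, ?_, ?_⟩
  · refine Real.le_sqrt_of_sq_le ?_
    rw [mul_pow, hn]
    unfold ip
    rw [q2, mul_left_comm]
    exact mul_le_mul_of_nonneg_left (by linarith) hh.le
  · refine Real.sqrt_le_sqrt ?_
    unfold ip
    rw [q2]
    exact mul_le_mul_of_nonneg_left (by linarith) hh.le
  · rw [hn]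
    unfold ip
    rw [q1, mul_left_comm]
    exact mul_le_mul_of_nonneg_left (by linarith) hh.le
  · rw [hn]
    unfold ip
    rw [q1]
    exact mul_le_mul_of_nonneg_left (by linarith) hh.le
end

section
/- Two-dimensional compact operator norm bounds (part of Lemma 5.2): For every 2D periodic grid function v on ZMod Nx × ZMod Ny with mesh sizes h_x, h_y > 0, one has (4/9)‖v‖ ≤ ‖A_x A_y v‖ ≤ ‖v‖ and (1/9)‖v‖ ≤ ‖B_x B_y v‖ ≤ ‖v‖. -/
/-- One-directional bounds for `w = v + c (v ∘ e - 2 v + v ∘ e⁻¹)` with `0 ≤ c ≤ 1/4`. -/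
theorem aux_perm_bounds {α : Type*} [Fintype α] (e : α ≃ α) (c : ℝ) (hc : 0 ≤ c)
    (hc4 : c ≤ 1 / 4) (v w : α → ℝ)
    (hw : ∀ p, w p = v p + c * (v (e p) - 2 * v p + v (e.symm p))) :
    (1 - 4 * c) ^ 2 * ∑ p, v p * v p ≤ ∑ p, w p * w p ∧
      ∑ p, w p * w p ≤ ∑ p, v p * v p := by
  have h1 : ∑ p, v (e p) * v (e p) = ∑ p, v p * v p :=
    Equiv.sum_comp e (fun p => v p * v p)
  have h2 : ∑ p, v (e.symm p) * v (e.symm p) = ∑ p, v p * v p :=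
    Equiv.sum_comp e.symm (fun p => v p * v p)
  constructor
  · have key : ∑ p, ((2 * (1 - 4 * c) * (1 - 3 * c) - (1 - 4 * c) ^ 2) * (v p * v p)
        - (1 - 4 * c) * c * (v (e p) * v (e p))
        - (1 - 4 * c) * c * (v (e.symm p) * v (e.symm p))) ≤ ∑ p, w p * w p := by
      apply Finset.sum_le_sum
      intro p _
      have hk : 0 ≤ (1 - 4 * c) * c := mul_nonneg (by linarith) hc
      have a1 := sq_nonneg (w p - (1 - 4 * c) * v p)
      have a2 := mul_nonneg hk (sq_nonneg (v p + v (e p)))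
      have a3 := mul_nonneg hk (sq_nonneg (v p + v (e.symm p)))
      have a4 : w p * v p = (v p + c * (v (e p) - 2 * v p + v (e.symm p))) * v p := by
        rw [hw]
      have a5 : (1 - 4 * c) * (w p * v p)
          = (1 - 4 * c) * ((v p + c * (v (e p) - 2 * v p + v (e.symm p))) * v p) := by
        rw [a4]
      nlinarith
    rw [Finset.sum_sub_distrib, Finset.sum_sub_distrib, ← Finset.mul_sum, ← Finset.mul_sum,
      ← Finset.mul_sum, h1, h2] at key
    linarith
  · have key : ∑ p, w p * w p ≤ ∑ p, ((1 - 2 * c) * (v p * v p)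
        + c * (v (e p) * v (e p)) + c * (v (e.symm p) * v (e.symm p))) := by
      apply Finset.sum_le_sum
      intro p _
      rw [hw]
      have a1 := mul_nonneg (mul_nonneg hc (by linarith : 0 ≤ 1 - 2 * c))
        (sq_nonneg (v p - v (e p)))
      have a2 := mul_nonneg (mul_nonneg hc (by linarith : 0 ≤ 1 - 2 * c))
        (sq_nonneg (v p - v (e.symm p)))
      have a3 := mul_nonneg (mul_nonneg hc hc) (sq_nonneg (v (e p) - v (e.symm p)))
      nlinarith
    rw [Finset.sum_add_distrib, Finset.sum_add_distrib, ← Finset.mul_sum, ← Finset.mul_sum,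
      ← Finset.mul_sum, h1, h2] at key
    linarith

theorem aux_x (Nx Ny : ℕ) [NeZero Nx] [NeZero Ny] (hx : ℝ) (hhx : 0 < hx) (c : ℝ)
    (hc : 0 ≤ c) (hc4 : c ≤ 1 / 4) (v w : ZMod Nx × ZMod Ny → ℝ)
    (hw : ∀ p, w p = v p + hx ^ 2 * c * dx2 Nx Ny hx v p) :
    (1 - 4 * c) ^ 2 * ∑ p, v p * v p ≤ ∑ p, w p * w p ∧
      ∑ p, w p * w p ≤ ∑ p, v p * v p := by
  refine aux_perm_bounds ((Equiv.addRight (1 : ZMod Nx)).prodCongr (Equiv.refl (ZMod Ny)))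
    c hc hc4 v w ?_
  rintro ⟨i, j⟩
  rw [hw]
  simp only [dx2, Equiv.prodCongr_apply, Equiv.prodCongr_symm, Prod.map, Equiv.coe_addRight,
    Equiv.refl_apply, Equiv.refl_symm, Equiv.addRight_symm, ← sub_eq_add_neg]
  field_simp

theorem aux_y (Nx Ny : ℕ) [NeZero Nx] [NeZero Ny] (hy : ℝ) (hhy : 0 < hy) (c : ℝ)
    (hc : 0 ≤ c) (hc4 : c ≤ 1 / 4) (v w : ZMod Nx × ZMod Ny → ℝ)
    (hw : ∀ p, w p = v p + hy ^ 2 * c * dy2 Nx Ny hy v p) :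
    (1 - 4 * c) ^ 2 * ∑ p, v p * v p ≤ ∑ p, w p * w p ∧
      ∑ p, w p * w p ≤ ∑ p, v p * v p := by
  refine aux_perm_bounds ((Equiv.refl (ZMod Nx)).prodCongr (Equiv.addRight (1 : ZMod Ny)))
    c hc hc4 v w ?_
  rintro ⟨i, j⟩
  rw [hw]
  simp only [dy2, Equiv.prodCongr_apply, Equiv.prodCongr_symm, Prod.map, Equiv.coe_addRight,
    Equiv.refl_apply, Equiv.refl_symm, Equiv.addRight_symm, ← sub_eq_add_neg]
  field_simp

theorem aux_nrm (Nx Ny : ℕ) [NeZero Nx] [NeZero Ny] (hx hy : ℝ) (hhx : 0 < hx) (hhy : 0 < hy)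
    (k : ℝ) (hk : 0 ≤ k) (v w : ZMod Nx × ZMod Ny → ℝ)
    (h : k ^ 2 * ∑ p, v p * v p ≤ ∑ p, w p * w p) :
    k * nrm2 Nx Ny hx hy v ≤ nrm2 Nx Ny hx hy w := by
  unfold nrm2 ip2
  apply Real.le_sqrt_of_sq_le
  have hS : 0 ≤ ∑ p, v p * v p := Finset.sum_nonneg fun p _ => mul_self_nonneg _
  rw [mul_pow, Real.sq_sqrt (by positivity)]
  have := mul_le_mul_of_nonneg_left h (by positivity : 0 ≤ hx * hy)
  linarith

/-- Two-dimensional compact operator norm bounds (part of Lemma 5.2):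
`(4/9)‖v‖ ≤ ‖A_x A_y v‖ ≤ ‖v‖` and `(1/9)‖v‖ ≤ ‖B_x B_y v‖ ≤ ‖v‖`. -/
theorem compact_operator_norm_bounds_2d
    (Nx Ny : ℕ) [NeZero Nx] [NeZero Ny] (hx hy : ℝ) (hhx : 0 < hx) (hhy : 0 < hy)
    (v : ZMod Nx × ZMod Ny → ℝ) :
    4 / 9 * nrm2 Nx Ny hx hy v ≤ nrm2 Nx Ny hx hy (Ax Nx Ny hx (Ay Nx Ny hy v))
      ∧ nrm2 Nx Ny hx hy (Ax Nx Ny hx (Ay Nx Ny hy v)) ≤ nrm2 Nx Ny hx hy v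
      ∧ 1 / 9 * nrm2 Nx Ny hx hy v ≤ nrm2 Nx Ny hx hy (Bx Nx Ny hx (By Nx Ny hy v))
      ∧ nrm2 Nx Ny hx hy (Bx Nx Ny hx (By Nx Ny hy v)) ≤ nrm2 Nx Ny hx hy v := by
  have ay := aux_y Nx Ny hy hhy (1 / 12) (by norm_num) (by norm_num) v (Ay Nx Ny hy v)
    (fun p => by simp only [Ay]; ring)
  have ax := aux_x Nx Ny hx hhx (1 / 12) (by norm_num) (by norm_num) (Ay Nx Ny hy v)
    (Ax Nx Ny hx (Ay Nx Ny hy v)) (fun p => by rw [Ax]; ring)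
  have yb := aux_y Nx Ny hy hhy (1 / 6) (by norm_num) (by norm_num) v (By Nx Ny hy v)
    (fun p => by simp only [By]; ring)
  have xb := aux_x Nx Ny hx hhx (1 / 6) (by norm_num) (by norm_num) (By Nx Ny hy v)
    (Bx Nx Ny hx (By Nx Ny hy v)) (fun p => by rw [Bx]; ring)
  refine ⟨aux_nrm Nx Ny hx hy hhx hhy _ (by norm_num) _ _ ?_, ?_,
    aux_nrm Nx Ny hx hy hhx hhy _ (by norm_num) _ _ ?_, ?_⟩
  · linarith [ay.1, ax.1]
  · have := aux_nrm Nx Ny hx hy hhx hhy 1 (by norm_num) (Ax Nx Ny hx (Ay Nx Ny hy v)) v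
      (by linarith [ay.2, ax.2])
    linarith
  · linarith [yb.1, xb.1]
  · have := aux_nrm Nx Ny hx hy hhx hhy 1 (by norm_num) (Bx Nx Ny hx (By Nx Ny hy v)) v
      (by linarith [yb.2, xb.2])
    linarith
end

section
/- Stability estimate for the 2D perturbed Crank–Nicolson diffusion step (Lemma 5.4, core inequality): Let γˣ, γʸ > 0 and τ > 0, and write A = A_x A_y. Suppose e, e*, R are 2D periodic grid functions and ē = (e* + e)/2 satisfies the error equation A((e* − e)/τ) − (γˣ/2) A_y δx² ē − (γʸ/2) A_x δy² ē + (γˣγʸτ/8) A δx² δy² ē = R. Then √((A e*, e*)) ≤ √((A e, e)) + (3/2) τ ‖R‖. -/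
/-- Forward difference in `x` (unscaled). -/
def fX (Nx Ny : ℕ) (v : ZMod Nx × ZMod Ny → ℝ) : ZMod Nx × ZMod Ny → ℝ :=
  fun p => v (p.1 + 1, p.2) - v p

/-- Forward difference in `y` (unscaled). -/
def fY (Nx Ny : ℕ) (v : ZMod Nx × ZMod Ny → ℝ) : ZMod Nx × ZMod Ny → ℝ :=
  fun p => v (p.1, p.2 + 1) - v p

section helpers
set_option linter.unusedSectionVars false
variable (Nx Ny : ℕ) [NeZero Nx] [NeZero Ny]

lemma shx (f : ZMod Nx × ZMod Ny → ℝ) : ∑ p : ZMod Nx × ZMod Ny, f (p.1 + 1, p.2) = ∑ p, f p :=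
  Equiv.sum_comp ((Equiv.addRight (1 : ZMod Nx)).prodCongr (Equiv.refl (ZMod Ny))) f

lemma shy (f : ZMod Nx × ZMod Ny → ℝ) : ∑ p : ZMod Nx × ZMod Ny, f (p.1, p.2 + 1) = ∑ p, f p :=
  Equiv.sum_comp ((Equiv.refl (ZMod Nx)).prodCongr (Equiv.addRight (1 : ZMod Ny))) f

lemma sbpx (hx : ℝ) (u w : ZMod Nx × ZMod Ny → ℝ) :
    ∑ p, dx2 Nx Ny hx u p * w p = -(1 / hx ^ 2) * ∑ p, fX Nx Ny u p * fX Nx Ny w p := by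
  have h1 := shx Nx Ny (fun p => (u p - u (p.1 - 1, p.2)) * w p)
  simp only [add_sub_cancel_right] at h1
  have h2 : ∑ p, dx2 Nx Ny hx u p * w p = 1 / hx ^ 2 *
      (∑ p, (u (p.1 + 1, p.2) - u p) * w p - ∑ p, (u p - u (p.1 - 1, p.2)) * w p) := by
    rw [← Finset.sum_sub_distrib, Finset.mul_sum]
    refine Finset.sum_congr rfl fun p _ => ?_
    simp only [dx2]; ring
  rw [h2, ← h1, ← Finset.sum_sub_distrib, Finset.mul_sum, Finset.mul_sum]
  refine Finset.sum_congr rfl fun p _ => ?_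
  simp only [fX]; ring

lemma sbpy (hy : ℝ) (u w : ZMod Nx × ZMod Ny → ℝ) :
    ∑ p, dy2 Nx Ny hy u p * w p = -(1 / hy ^ 2) * ∑ p, fY Nx Ny u p * fY Nx Ny w p := by
  have h1 := shy Nx Ny (fun p => (u p - u (p.1, p.2 - 1)) * w p)
  simp only [add_sub_cancel_right] at h1
  have h2 : ∑ p, dy2 Nx Ny hy u p * w p = 1 / hy ^ 2 *
      (∑ p, (u (p.1, p.2 + 1) - u p) * w p - ∑ p, (u p - u (p.1, p.2 - 1)) * w p) := by
    rw [← Finset.sum_sub_distrib, Finset.mul_sum]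
    refine Finset.sum_congr rfl fun p _ => ?_
    simp only [dy2]; ring
  rw [h2, ← h1, ← Finset.sum_sub_distrib, Finset.mul_sum, Finset.mul_sum]
  refine Finset.sum_congr rfl fun p _ => ?_
  simp only [fY]; ring

lemma sAx {hx : ℝ} (h : 0 < hx) (u w : ZMod Nx × ZMod Ny → ℝ) :
    ∑ p, Ax Nx Ny hx u p * w p
      = ∑ p, u p * w p - 1 / 12 * ∑ p, fX Nx Ny u p * fX Nx Ny w p := by
  have h1 : ∑ p, Ax Nx Ny hx u p * w p
      = ∑ p, u p * w p + hx ^ 2 / 12 * ∑ p, dx2 Nx Ny hx u p * w p := by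
    rw [Finset.mul_sum, ← Finset.sum_add_distrib]
    refine Finset.sum_congr rfl fun p _ => ?_
    simp only [Ax]; ring
  rw [h1, sbpx]; field_simp; ring

lemma sAy {hy : ℝ} (h : 0 < hy) (u w : ZMod Nx × ZMod Ny → ℝ) :
    ∑ p, Ay Nx Ny hy u p * w p
      = ∑ p, u p * w p - 1 / 12 * ∑ p, fY Nx Ny u p * fY Nx Ny w p := by
  have h1 : ∑ p, Ay Nx Ny hy u p * w p
      = ∑ p, u p * w p + hy ^ 2 / 12 * ∑ p, dy2 Nx Ny hy u p * w p := by
    rw [Finset.mul_sum, ← Finset.sum_add_distrib]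
    refine Finset.sum_congr rfl fun p _ => ?_
    simp only [Ay]; ring
  rw [h1, sbpy]; field_simp; ring

lemma fX_Ay (hy : ℝ) (u : ZMod Nx × ZMod Ny → ℝ) :
    fX Nx Ny (Ay Nx Ny hy u) = Ay Nx Ny hy (fX Nx Ny u) := by
  funext p; simp only [fX, Ay, dy2]; ring

lemma fY_fX (u : ZMod Nx × ZMod Ny → ℝ) :
    fY Nx Ny (fX Nx Ny u) = fX Nx Ny (fY Nx Ny u) := by
  funext p; simp only [fX, fY]; ring

lemma Ay_dx2 (hx hy : ℝ) (u : ZMod Nx × ZMod Ny → ℝ) :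
    Ay Nx Ny hy (dx2 Nx Ny hx u) = dx2 Nx Ny hx (Ay Nx Ny hy u) := by
  funext p; simp only [Ay, dx2, dy2]; ring

lemma Ax_dx2 (hx : ℝ) (u : ZMod Nx × ZMod Ny → ℝ) :
    Ax Nx Ny hx (dx2 Nx Ny hx u) = dx2 Nx Ny hx (Ax Nx Ny hx u) := by
  funext p; simp only [Ax, dx2, add_sub_cancel_right, sub_add_cancel]; ring

lemma Ay_dy2 (hy : ℝ) (u : ZMod Nx × ZMod Ny → ℝ) :
    Ay Nx Ny hy (dy2 Nx Ny hy u) = dy2 Nx Ny hy (Ay Nx Ny hy u) := by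
  funext p; simp only [Ay, dy2, add_sub_cancel_right, sub_add_cancel]; ring

lemma Ax_dy2 (hx hy : ℝ) (u : ZMod Nx × ZMod Ny → ℝ) :
    Ax Nx Ny hx (dy2 Nx Ny hy u) = dy2 Nx Ny hy (Ax Nx Ny hx u) := by
  funext p; simp only [Ax, dx2, dy2]; ring

lemma fY_Ax (hx : ℝ) (u : ZMod Nx × ZMod Ny → ℝ) :
    fY Nx Ny (Ax Nx Ny hx u) = Ax Nx Ny hx (fY Nx Ny u) := by
  funext p; simp only [fY, Ax, dx2]; ring

lemma fX_Ax (hx : ℝ) (u : ZMod Nx × ZMod Ny → ℝ) :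
    fX Nx Ny (Ax Nx Ny hx u) = Ax Nx Ny hx (fX Nx Ny u) := by
  funext p; simp only [fX, Ax, dx2, add_sub_cancel_right, sub_add_cancel]; ring

lemma fY_Ay (hy : ℝ) (u : ZMod Nx × ZMod Ny → ℝ) :
    fY Nx Ny (Ay Nx Ny hy u) = Ay Nx Ny hy (fY Nx Ny u) := by
  funext p; simp only [fY, Ay, dy2, add_sub_cancel_right, sub_add_cancel]; ring

lemma fX_dy2 (hy : ℝ) (u : ZMod Nx × ZMod Ny → ℝ) :
    fX Nx Ny (dy2 Nx Ny hy u) = dy2 Nx Ny hy (fX Nx Ny u) := by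
  funext p; simp only [fX, dy2]; ring

lemma sA {hx hy : ℝ} (h : 0 < hx) (h' : 0 < hy) (u w : ZMod Nx × ZMod Ny → ℝ) :
    ∑ p, Ax Nx Ny hx (Ay Nx Ny hy u) p * w p
      = ∑ p, (u p * w p - 1 / 12 * (fY Nx Ny u p * fY Nx Ny w p)
        - 1 / 12 * (fX Nx Ny u p * fX Nx Ny w p)
        + 1 / 144 * (fY Nx Ny (fX Nx Ny u) p * fY Nx Ny (fX Nx Ny w) p)) := by
  rw [sAx Nx Ny h, sAy Nx Ny h', fX_Ay, sAy Nx Ny h']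
  simp only [Finset.sum_add_distrib, Finset.sum_sub_distrib, ← Finset.mul_sum]
  ring

lemma nX (u : ZMod Nx × ZMod Ny → ℝ) :
    ∑ p, fX Nx Ny u p * fX Nx Ny u p ≤ 4 * ∑ p, u p * u p := by
  have h1 := shx Nx Ny (fun p => u p * u p)
  have h2 : ∑ p, fX Nx Ny u p * fX Nx Ny u p
      ≤ ∑ p, (2 * (u (p.1 + 1, p.2) * u (p.1 + 1, p.2)) + 2 * (u p * u p)) := by
    refine Finset.sum_le_sum fun p _ => ?_
    simp only [fX]; nlinarith [sq_nonneg (u (p.1 + 1, p.2) + u p)]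
  simp only [Finset.sum_add_distrib, ← Finset.mul_sum] at h2
  linarith

lemma nY (u : ZMod Nx × ZMod Ny → ℝ) :
    ∑ p, fY Nx Ny u p * fY Nx Ny u p ≤ 4 * ∑ p, u p * u p := by
  have h1 := shy Nx Ny (fun p => u p * u p)
  have h2 : ∑ p, fY Nx Ny u p * fY Nx Ny u p
      ≤ ∑ p, (2 * (u (p.1, p.2 + 1) * u (p.1, p.2 + 1)) + 2 * (u p * u p)) := by
    refine Finset.sum_le_sum fun p _ => ?_
    simp only [fY]; nlinarith [sq_nonneg (u (p.1, p.2 + 1) + u p)]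
  simp only [Finset.sum_add_distrib, ← Finset.mul_sum] at h2
  linarith

lemma n0 (u : ZMod Nx × ZMod Ny → ℝ) : 0 ≤ ∑ p, u p * u p :=
  Finset.sum_nonneg fun p _ => mul_self_nonneg _

lemma Axlow {hx : ℝ} (h : 0 < hx) (u : ZMod Nx × ZMod Ny → ℝ) :
    2 / 3 * ∑ p, u p * u p ≤ ∑ p, Ax Nx Ny hx u p * u p := by
  rw [sAx Nx Ny h]; linarith [nX Nx Ny u]

lemma Aylow {hy : ℝ} (h : 0 < hy) (u : ZMod Nx × ZMod Ny → ℝ) :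
    2 / 3 * ∑ p, u p * u p ≤ ∑ p, Ay Nx Ny hy u p * u p := by
  rw [sAy Nx Ny h]; linarith [nY Nx Ny u]

lemma Alow {hx hy : ℝ} (h : 0 < hx) (h' : 0 < hy) (u : ZMod Nx × ZMod Ny → ℝ) :
    4 / 9 * ∑ p, u p * u p ≤ ∑ p, Ax Nx Ny hx (Ay Nx Ny hy u) p * u p := by
  have a := Aylow Nx Ny h' u
  have b := Aylow Nx Ny h' (fun p => u (p.1 + 1, p.2) + u p)
  have b0 := n0 Nx Ny (fun p => u (p.1 + 1, p.2) + u p)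
  have c := shx Nx Ny (fun p => Ay Nx Ny hy u p * u p)
  have key : ∑ p, Ay Nx Ny hy (fX Nx Ny u) p * fX Nx Ny u p
      + ∑ p, Ay Nx Ny hy (fun p => u (p.1 + 1, p.2) + u p) p * (u (p.1 + 1, p.2) + u p)
      = 2 * ∑ p : ZMod Nx × ZMod Ny, Ay Nx Ny hy u (p.1 + 1, p.2) * u (p.1 + 1, p.2)
        + 2 * ∑ p, Ay Nx Ny hy u p * u p := by
    simp only [Finset.mul_sum, ← Finset.sum_add_distrib]
    refine Finset.sum_congr rfl fun p _ => ?_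
    simp only [fX, Ay, dy2]; ring
  rw [sAx Nx Ny h, fX_Ay]
  linarith

end helpers

/-- Stability estimate for the 2D perturbed Crank–Nicolson diffusion step
(Lemma 5.4, core inequality): if `ē = (e* + e)/2` satisfies
`A((e* − e)/τ) − (γˣ/2) A_y δx² ē − (γʸ/2) A_x δy² ē + (γˣγʸτ/8) A δx² δy² ē = R`,
with `A = A_x A_y`, then `‖e*‖_A ≤ ‖e‖_A + (3/2) τ ‖R‖`. -/
theorem perturbed_crank_nicolson_stability_2d
    (Nx Ny : ℕ) [NeZero Nx] [NeZero Ny] (hx hy τ γx γy : ℝ)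
    (hhx : 0 < hx) (hhy : 0 < hy) (hτ : 0 < τ) (hγx : 0 < γx) (hγy : 0 < γy)
    (e estar R : ZMod Nx × ZMod Ny → ℝ)
    (heq : ∀ p : ZMod Nx × ZMod Ny,
      Ax Nx Ny hx (Ay Nx Ny hy (fun q => (estar q - e q) / τ)) p
        - γx / 2 * Ay Nx Ny hy (dx2 Nx Ny hx (fun q => (estar q + e q) / 2)) p
        - γy / 2 * Ax Nx Ny hx (dy2 Nx Ny hy (fun q => (estar q + e q) / 2)) p
        + γx * γy * τ / 8 *
            Ax Nx Ny hx (Ay Nx Ny hy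
              (dx2 Nx Ny hx (dy2 Nx Ny hy (fun q => (estar q + e q) / 2)))) p
        = R p) :
    Real.sqrt (ip2 Nx Ny hx hy (Ax Nx Ny hx (Ay Nx Ny hy estar)) estar)
      ≤ Real.sqrt (ip2 Nx Ny hx hy (Ax Nx Ny hx (Ay Nx Ny hy e)) e)
        + 3 / 2 * τ * nrm2 Nx Ny hx hy R := by
  have hN := fun u => Alow Nx Ny hhx hhy u
  have hs := fun u w => sA Nx Ny hhx hhy u w
  set m : ZMod Nx × ZMod Ny → ℝ := fun q => (estar q + e q) / 2 with hm
  -- test the error equation with `m`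
  have e1 : ∑ p, Ax Nx Ny hx (Ay Nx Ny hy (fun q => (estar q - e q) / τ)) p * m p
      = 1 / (2 * τ) * (∑ p, Ax Nx Ny hx (Ay Nx Ny hy estar) p * estar p
        - ∑ p, Ax Nx Ny hx (Ay Nx Ny hy e) p * e p) := by
    rw [hs, hs, hs, ← Finset.sum_sub_distrib, Finset.mul_sum]
    refine Finset.sum_congr rfl fun p _ => ?_
    simp only [hm, fX, fY]; field_simp; ring
  have e2 : ∑ p, Ay Nx Ny hy (dx2 Nx Ny hx m) p * m p ≤ 0 := by
    rw [Ay_dx2, sbpx, fX_Ay]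
    have a := Aylow Nx Ny hhy (fX Nx Ny m)
    have b := n0 Nx Ny (fX Nx Ny m)
    have c : 0 < 1 / hx ^ 2 := by positivity
    nlinarith
  have e3 : ∑ p, Ax Nx Ny hx (dy2 Nx Ny hy m) p * m p ≤ 0 := by
    rw [Ax_dy2, sbpy, fY_Ax]
    have a := Axlow Nx Ny hhx (fY Nx Ny m)
    have b := n0 Nx Ny (fY Nx Ny m)
    have c : 0 < 1 / hy ^ 2 := by positivity
    nlinarith
  have e4 : 0 ≤ ∑ p, Ax Nx Ny hx (Ay Nx Ny hy (dx2 Nx Ny hx (dy2 Nx Ny hy m))) p * m p := by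
    rw [Ay_dx2, Ax_dx2, sbpx, Ay_dy2, Ax_dy2, fX_dy2, sbpy, fX_Ax, fX_Ay, fY_Ax, fY_Ay]
    have a := hN (fY Nx Ny (fX Nx Ny m))
    have b := n0 Nx Ny (fY Nx Ny (fX Nx Ny m))
    have c : 0 < 1 / hx ^ 2 := by positivity
    have d : 0 < 1 / hy ^ 2 := by positivity
    have f : 0 ≤ ∑ p, Ax Nx Ny hx (Ay Nx Ny hy (fY Nx Ny (fX Nx Ny m))) p
        * fY Nx Ny (fX Nx Ny m) p := by linarith
    have g := mul_nonneg (mul_pos c d).le f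
    linarith
  have e5 : ∑ p, R p * m p = 1 / 2 * (∑ p, R p * estar p + ∑ p, R p * e p) := by
    rw [← Finset.sum_add_distrib, Finset.mul_sum]
    refine Finset.sum_congr rfl fun p _ => ?_
    simp only [hm]; ring
  have e6 : ∑ p, R p * m p
      = ∑ p, Ax Nx Ny hx (Ay Nx Ny hy (fun q => (estar q - e q) / τ)) p * m p
        - γx / 2 * ∑ p, Ay Nx Ny hy (dx2 Nx Ny hx m) p * m p
        - γy / 2 * ∑ p, Ax Nx Ny hx (dy2 Nx Ny hy m) p * m p
        + γx * γy * τ / 8 *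
          ∑ p, Ax Nx Ny hx (Ay Nx Ny hy (dx2 Nx Ny hx (dy2 Nx Ny hy m))) p * m p := by
    simp only [Finset.mul_sum, ← Finset.sum_sub_distrib, ← Finset.sum_add_distrib]
    refine Finset.sum_congr rfl fun p _ => ?_
    rw [← heq p]; ring
  have e7 : 1 / (2 * τ) * (∑ p, Ax Nx Ny hx (Ay Nx Ny hy estar) p * estar p
        - ∑ p, Ax Nx Ny hx (Ay Nx Ny hy e) p * e p)
      ≤ 1 / 2 * (∑ p, R p * estar p + ∑ p, R p * e p) := by
    rw [← e1, ← e5, e6]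
    have a : 0 ≤ γx / 2 * -∑ p, Ay Nx Ny hy (dx2 Nx Ny hx m) p * m p :=
      mul_nonneg (by positivity) (by linarith)
    have b : 0 ≤ γy / 2 * -∑ p, Ax Nx Ny hx (dy2 Nx Ny hy m) p * m p :=
      mul_nonneg (by positivity) (by linarith)
    have c := mul_nonneg (show 0 ≤ γx * γy * τ / 8 by positivity) e4
    linarith
  have hh : 0 < hx * hy := by positivity
  -- Cauchy–Schwarz and norm comparison
  have cs : ∀ u : ZMod Nx × ZMod Ny → ℝ, hx * hy * ∑ p, R p * u p
      ≤ nrm2 Nx Ny hx hy R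
        * (3 / 2 * √(ip2 Nx Ny hx hy (Ax Nx Ny hx (Ay Nx Ny hy u)) u)) := by
    intro u
    have a := Finset.sum_mul_sq_le_sq_mul_sq Finset.univ R u
    simp only [pow_two (R _), pow_two (u _)] at a
    have b := hN u
    have nR := n0 Nx Ny R
    have nu := n0 Nx Ny u
    have k : (3 / 2 : ℝ) = √(9 / 4) := by
      rw [show (9 / 4 : ℝ) = (3 / 2) ^ 2 by norm_num, Real.sqrt_sq (by norm_num)]
    rw [k, nrm2, ← Real.sqrt_mul (by norm_num), ip2, ip2, ← Real.sqrt_mul (by positivity)]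
    apply Real.le_sqrt_of_sq_le
    have c := mul_le_mul_of_nonneg_left b nR
    have d : (∑ p, R p * u p) ^ 2 ≤ 9 / 4 * ((∑ p, R p * R p)
        * ∑ p, Ax Nx Ny hx (Ay Nx Ny hy u) p * u p) := by linarith
    have f := mul_le_mul_of_nonneg_left d (sq_nonneg (hx * hy))
    linarith
  have c1 := cs estar
  have c2 := cs e
  have nn : ∀ u : ZMod Nx × ZMod Ny → ℝ,
      0 ≤ ip2 Nx Ny hx hy (Ax Nx Ny hx (Ay Nx Ny hy u)) u := fun u =>
    mul_nonneg hh.le (by linarith [hN u, n0 Nx Ny u])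
  have s1 := Real.sq_sqrt (nn estar)
  have s2 := Real.sq_sqrt (nn e)
  have p1 := Real.sqrt_nonneg (ip2 Nx Ny hx hy (Ax Nx Ny hx (Ay Nx Ny hy estar)) estar)
  have p2 := Real.sqrt_nonneg (ip2 Nx Ny hx hy (Ax Nx Ny hx (Ay Nx Ny hy e)) e)
  have r0 : 0 ≤ nrm2 Nx Ny hx hy R := Real.sqrt_nonneg _
  have e8 : ip2 Nx Ny hx hy (Ax Nx Ny hx (Ay Nx Ny hy estar)) estar
      - ip2 Nx Ny hx hy (Ax Nx Ny hx (Ay Nx Ny hy e)) e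
      ≤ τ * (hx * hy * ∑ p, R p * estar p + hx * hy * ∑ p, R p * e p) := by
    have a := mul_le_mul_of_nonneg_left e7 (show 0 ≤ 2 * τ * (hx * hy) by positivity)
    have b : 2 * τ * (hx * hy) * (1 / (2 * τ) *
        (∑ p, Ax Nx Ny hx (Ay Nx Ny hy estar) p * estar p
        - ∑ p, Ax Nx Ny hx (Ay Nx Ny hy e) p * e p))
        = ip2 Nx Ny hx hy (Ax Nx Ny hx (Ay Nx Ny hy estar)) estar
      - ip2 Nx Ny hx hy (Ax Nx Ny hx (Ay Nx Ny hy e)) e := by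
      simp only [ip2]; field_simp
    rw [b] at a
    linarith
  have e9 := mul_le_mul_of_nonneg_left (add_le_add c1 c2) hτ.le
  generalize √(ip2 Nx Ny hx hy (Ax Nx Ny hx (Ay Nx Ny hy estar)) estar) = P at *
  generalize √(ip2 Nx Ny hx hy (Ax Nx Ny hx (Ay Nx Ny hy e)) e) = Q at *
  generalize nrm2 Nx Ny hx hy R = r at *
  have t : 0 ≤ 3 / 2 * τ * r := by positivity
  by_contra! hc
  have hPQ : 0 < P + Q := by linarith
  have := mul_lt_mul_of_pos_right (show 3 / 2 * τ * r < P - Q by linarith) hPQ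
  linarith
end

section
/- Pointwise non-expansiveness of the KKT bound-preserving correction: Let m < M, τ > 0, H(s) = (M − s)(s − m). Suppose u*, u, ū, λ ∈ ℝ satisfy m ≤ u* ≤ M, u − ū = τ λ H'(u), λ ≥ 0, H(u) ≥ 0, and λ H(u) = 0. Then (u* − u) · λ H'(u) ≥ 0 and consequently |u* − u| ≤ |u* − ū|. -/
/-- Pointwise non-expansiveness of the KKT bound-preserving correction:
with `H(s) = (M − s)(s − m)` and `H'(s) = M + m − 2s`, if `m ≤ u* ≤ M`,
`u − ū = τ λ H'(u)`, `λ ≥ 0`, `H(u) ≥ 0` and `λ H(u) = 0`, then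
`(u* − u) · λ H'(u) ≥ 0` and `|u* − u| ≤ |u* − ū|`. -/
theorem kkt_correction_pointwise_nonexpansive
    (m M τ ustar u ubar lam : ℝ) (hmM : m < M) (hτ : 0 < τ)
    (hlo : m ≤ ustar) (hhi : ustar ≤ M)
    (heq : u - ubar = τ * (lam * (M + m - 2 * u)))
    (hlam : 0 ≤ lam)
    (hH : 0 ≤ (M - u) * (u - m))
    (hcomp : lam * ((M - u) * (u - m)) = 0) :
    0 ≤ (ustar - u) * (lam * (M + m - 2 * u)) ∧ |ustar - u| ≤ |ustar - ubar| := by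
  have h1 : 0 ≤ (ustar - u) * (lam * (M + m - 2 * u)) := by
    have hA : 0 ≤ lam * ((M - ustar) * (ustar - m)) :=
      mul_nonneg hlam (mul_nonneg (sub_nonneg.2 hhi) (sub_nonneg.2 hlo))
    have hB : 0 ≤ lam * (ustar - u) ^ 2 := mul_nonneg hlam (sq_nonneg _)
    have key : (ustar - u) * (lam * (M + m - 2 * u)) =
        lam * ((M - ustar) * (ustar - m)) - lam * ((M - u) * (u - m))
          + lam * (ustar - u) ^ 2 := by ring
    rw [key, hcomp]
    linarith
  refine ⟨h1, ?_⟩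
  apply sq_le_sq.mp
  have h2 : ustar - ubar = (ustar - u) + τ * (lam * (M + m - 2 * u)) := by linarith
  rw [h2]
  have h3 := mul_nonneg hτ.le h1
  have h4 := sq_nonneg (τ * (lam * (M + m - 2 * u)))
  linarith [show ((ustar - u) + τ * (lam * (M + m - 2 * u))) ^ 2 = (ustar - u) ^ 2
    + 2 * (τ * ((ustar - u) * (lam * (M + m - 2 * u))))
    + (τ * (lam * (M + m - 2 * u))) ^ 2 by ring]
end

section
/- Discrete L²-norm estimate for the KKT correction step (key inequality (5.17)–(5.20) in the error analysis): Let m < M, τ > 0, H(s) = (M − s)(s − m). Let u*, u, ū, λ be periodic grid functions such that for every index i: m ≤ u*_i ≤ M, u_i − ū_i = τ λ_i H'(u_i), λ_i ≥ 0, H(u_i) ≥ 0, and λ_i H(u_i) = 0. Then ‖u* − u‖ ≤ ‖u* − ū‖ in the discrete L² norm. -/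
/-- Discrete L²-norm estimate for the KKT correction step (key inequality
(5.17)–(5.20)): with `H(s) = (M − s)(s − m)` and `H'(s) = M + m − 2s`, if
pointwise `m ≤ u*ᵢ ≤ M`, `uᵢ − ūᵢ = τ λᵢ H'(uᵢ)`, `λᵢ ≥ 0`, `H(uᵢ) ≥ 0` and
`λᵢ H(uᵢ) = 0`, then `‖u* − u‖ ≤ ‖u* − ū‖`. -/
theorem kkt_correction_l2_nonexpansive
    (N : ℕ) [NeZero N] (h m M τ : ℝ) (hh : 0 < h) (hmM : m < M) (hτ : 0 < τ)
    (ustar u ubar lam : ZMod N → ℝ)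
    (hlo : ∀ i : ZMod N, m ≤ ustar i) (hhi : ∀ i : ZMod N, ustar i ≤ M)
    (heq : ∀ i : ZMod N, u i - ubar i = τ * (lam i * (M + m - 2 * u i)))
    (hlam : ∀ i : ZMod N, 0 ≤ lam i)
    (hH : ∀ i : ZMod N, 0 ≤ (M - u i) * (u i - m))
    (hcomp : ∀ i : ZMod N, lam i * ((M - u i) * (u i - m)) = 0) :
    nrm N h (fun i => ustar i - u i) ≤ nrm N h (fun i => ustar i - ubar i) := by
  unfold nrm ip
  apply Real.sqrt_le_sqrt
  apply mul_le_mul_of_nonneg_left _ hh.le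
  apply Finset.sum_le_sum
  intro i _
  have hd : 0 ≤ (u i - ubar i) * (ustar i - u i) := by
    have hp : 0 ≤ τ * lam i := mul_nonneg hτ.le (hlam i)
    have hlo' := hlo i
    have hhi' := hhi i
    rw [heq i]
    rcases mul_eq_zero.mp (hcomp i) with h0 | h0
    · simp [h0]
    · rcases mul_eq_zero.mp h0 with h1 | h1
      · have hu : u i = M := by linarith
        rw [hu]
        have := mul_nonneg hp (mul_nonneg (sub_nonneg.2 hmM.le) (sub_nonneg.2 hhi'))
        linarith
      · have hu : u i = m := by linarith
        rw [hu]
        have := mul_nonneg hp (mul_nonneg (sub_nonneg.2 hmM.le) (sub_nonneg.2 hlo'))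
        linarith
  nlinarith [sq_nonneg (u i - ubar i)]
end

section
/- Invertibility and uniform boundedness of the inverse of the compact operator B: For every periodic grid function w on ZMod N with mesh size h > 0, there exists a unique periodic grid function v with B v = w, where B v = v + (h²/6) δ² v; moreover ‖v‖ ≤ 3 ‖w‖ in the discrete L² norm. That is, B is bijective on the space of periodic grid functions and ‖B⁻¹ w‖ ≤ 3‖w‖ for all w. -/
theorem Bop_apply_eq (N : ℕ) (h : ℝ) (hh : 0 < h) (v : ZMod N → ℝ) (i : ZMod N) :
    Bop N h v i = (v (i + 1) + 4 * v i + v (i - 1)) / 6 := by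
  have : h ≠ 0 := hh.ne'
  simp only [Bop, delta2]
  field_simp
  ring

theorem Bop_sum_bound (N : ℕ) [NeZero N] (h : ℝ) (hh : 0 < h) (v : ZMod N → ℝ) :
    ∑ i, v i * v i ≤ 9 * ∑ i, Bop N h v i * Bop N h v i := by
  have e1 : ∑ i, v (i + 1) * v (i + 1) = ∑ i, v i * v i :=
    Equiv.sum_comp (Equiv.addRight (1 : ZMod N)) (fun i => v i * v i)
  have e2 : ∑ i, v (i - 1) * v (i - 1) = ∑ i, v i * v i :=
    Equiv.sum_comp (Equiv.subRight (1 : ZMod N)) (fun i => v i * v i)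
  have key : ∑ i, (3 * (v i * v i) - (1 / 2) * (v (i + 1) * v (i + 1))
      - (1 / 2) * (v (i - 1) * v (i - 1)) - v i * v i)
      ≤ ∑ i, 9 * (Bop N h v i * Bop N h v i) := by
    apply Finset.sum_le_sum
    intro i _
    have hb := Bop_apply_eq N h hh v i
    have h6 : 6 * Bop N h v i = v (i + 1) + 4 * v i + v (i - 1) := by rw [hb]; ring
    have h7 : v i * (6 * Bop N h v i) = v i * (v (i + 1) + 4 * v i + v (i - 1)) := by rw [h6]
    nlinarith [sq_nonneg (v i - 3 * Bop N h v i), sq_nonneg (v i + v (i + 1)),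
      sq_nonneg (v i + v (i - 1))]
  simp only [Finset.sum_sub_distrib, ← Finset.mul_sum, e1, e2] at key
  linarith

/-- `B` as a linear map. -/
noncomputable def BopLin (N : ℕ) (h : ℝ) : (ZMod N → ℝ) →ₗ[ℝ] (ZMod N → ℝ) where
  toFun := Bop N h
  map_add' v w := by
    funext i
    simp only [Bop, delta2, Pi.add_apply]
    ring
  map_smul' c v := by
    funext i
    simp only [Bop, delta2, Pi.smul_apply, smul_eq_mul, RingHom.id_apply]
    ring

theorem BopLin_injective (N : ℕ) [NeZero N] (h : ℝ) (hh : 0 < h) :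
    Function.Injective (BopLin N h) := by
  rw [injective_iff_map_eq_zero]
  intro v hv
  have hv' : Bop N h v = 0 := hv
  have hb := Bop_sum_bound N h hh v
  rw [hv'] at hb
  simp only [Pi.zero_apply, mul_zero, Finset.sum_const_zero] at hb
  have h0 : ∑ i, v i * v i = 0 :=
    le_antisymm hb (Finset.sum_nonneg fun i _ => mul_self_nonneg _)
  rw [Finset.sum_eq_zero_iff_of_nonneg (fun i _ => mul_self_nonneg _)] at h0
  funext i
  exact mul_self_eq_zero.mp (h0 i (Finset.mem_univ i))

/-- Invertibility and uniform boundedness of the inverse of the compact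
operator `B`: for every `w` there is a unique `v` with `B v = w`, and any
such `v` satisfies `‖v‖ ≤ 3‖w‖`, i.e. `‖B⁻¹‖ ≤ 3`. -/
theorem Bop_bijective_inverse_bounded
    (N : ℕ) [NeZero N] (h : ℝ) (hh : 0 < h) (w : ZMod N → ℝ) :
    (∃! v : ZMod N → ℝ, Bop N h v = w)
      ∧ ∀ v : ZMod N → ℝ, Bop N h v = w → nrm N h v ≤ 3 * nrm N h w := by
  constructor
  · have hinj := BopLin_injective N h hh
    obtain ⟨v, hv⟩ := (LinearMap.injective_iff_surjective.mp hinj) w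
    refine ⟨v, hv, fun y hy => hinj ?_⟩
    exact (show Bop N h y = Bop N h v from hy.trans (Eq.symm hv))
  · rintro v rfl
    have hb := Bop_sum_bound N h hh v
    unfold nrm ip
    apply Real.sqrt_le_iff.mpr
    refine ⟨by positivity, ?_⟩
    rw [mul_pow, Real.sq_sqrt
      (mul_nonneg hh.le (Finset.sum_nonneg fun i _ => mul_self_nonneg _))]
    nlinarith [mul_le_mul_of_nonneg_left hb hh.le]
end
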